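/- Let n ≥ 1, T₀ > 0, and A = {(0,0,0), (0,0,T₀)} ⊆ ℍ^n. Then the union over all m ≥ 1 of the iterated geodesic hulls G^m(A) is the whole space: ∪_{m=1}^∞ G^m(A) = ℍ^n. -/

import Mathlib

open MeasureTheory Set Real
open scoped ENNReal NNReal

noncomputable section

/-- Points of the Heisenberg group `ℍⁿ`, written `(x, y, t)` with `x, y ∈ ℝⁿ`, `t ∈ ℝ`. -/
abbrev Hpt (n : ℕ) : Type := (Fin n → ℝ) × (Fin n → ℝ) × ℝ

/-- The projection of a point of `ℍⁿ` onto the horizontal `z = (x,y)` plane, viewed as a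
point of the Euclidean space `ℝ^{2n}` (so that lengths are Euclidean lengths). -/
def hproj {n : ℕ} (p : Hpt n) : EuclideanSpace ℝ (Fin n ⊕ Fin n) :=
  (WithLp.equiv 2 ((Fin n ⊕ Fin n) → ℝ)).symm (Sum.elim p.1 p.2.1)

/-- A curve `γ` is a horizontal curve on `[a,b]` if it is (absolutely continuous, here:
Lipschitz) and almost everywhere it has a derivative `γ' = (x', y', t')` satisfying the
horizontality condition `t' = 2 ∑ⱼ (xⱼ' yⱼ - yⱼ' xⱼ)`. -/
def IsHorizontal {n : ℕ} (γ : ℝ → Hpt n) (a b : ℝ) : Prop :=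
  a ≤ b ∧ (∃ K : NNReal, LipschitzOnWith K γ (Icc a b)) ∧
    ∃ γ' : ℝ → Hpt n,
      (∀ᵐ s ∂(volume.restrict (Icc a b)), HasDerivAt γ (γ' s) s) ∧
      (∀ᵐ s ∂(volume.restrict (Icc a b)),
        (γ' s).2.2 = 2 * ∑ j, ((γ' s).1 j * (γ s).2.1 j - (γ' s).2.1 j * (γ s).1 j))

/-- The length of a horizontal curve on `[a,b]`: the Euclidean length (total variation)
of its projection to the `z`-plane `ℝ^{2n}`. -/
def hLength {n : ℕ} (γ : ℝ → Hpt n) (a b : ℝ) : ℝ≥0∞ :=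
  eVariationOn (fun s => hproj (γ s)) (Icc a b)

/-- The Carnot–Carathéodory distance: the infimum of lengths of horizontal curves
joining `p` to `q`. -/
def ccDist {n : ℕ} (p q : Hpt n) : ℝ≥0∞ :=
  ⨅ (γ : ℝ → Hpt n) (a : ℝ) (b : ℝ) (_ : IsHorizontal γ a b)
    (_ : γ a = p) (_ : γ b = q), hLength γ a b

/-- `γ` is a geodesic on `[a,b]`: a horizontal curve whose length equals the
Carnot–Carathéodory distance between its endpoints. -/
def IsGeodesicOn {n : ℕ} (γ : ℝ → Hpt n) (a b : ℝ) : Prop :=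
  IsHorizontal γ a b ∧ hLength γ a b = ccDist (γ a) (γ b)

/-- A set `A ⊆ ℍⁿ` is geodetically convex if every geodesic connecting any two points of
`A` lies in `A`. -/
def GeodConvexSet {n : ℕ} (A : Set (Hpt n)) : Prop :=
  ∀ p ∈ A, ∀ q ∈ A, ∀ (γ : ℝ → Hpt n) (a b : ℝ),
    IsGeodesicOn γ a b → γ a = p → γ b = q → ∀ s ∈ Icc a b, γ s ∈ A

/-- A function `u : ℍⁿ → ℝ` is geodetically convex if its composition with every geodesic
is convex. -/
def GeodConvexFun {n : ℕ} (u : Hpt n → ℝ) : Prop :=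
  ∀ (γ : ℝ → Hpt n) (a b : ℝ), IsGeodesicOn γ a b → ConvexOn ℝ (Icc a b) (u ∘ γ)

/-- The union of the images of all geodesics connecting pairs of points of `S`. -/
def geodJoin {n : ℕ} (S : Set (Hpt n)) : Set (Hpt n) :=
  {z | ∃ p ∈ S, ∃ q ∈ S, ∃ (γ : ℝ → Hpt n) (a b : ℝ),
    IsGeodesicOn γ a b ∧ γ a = p ∧ γ b = q ∧ z ∈ γ '' Icc a b}

/-- The iterated geodesic hulls `G^m(A)`, with `G^0(A) = A`. -/
def Gm {n : ℕ} (A : Set (Hpt n)) : ℕ → Set (Hpt n)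
  | 0 => A
  | (m + 1) => geodJoin (Gm A m)

open Filter Topology

/-!
Call a set geodetically convex if it contains every geodesic joining two of its points; the union
of the hulls `G^m(A)` is such a set, so it suffices to show that a geodetically convex set `S`
containing two points of the vertical axis is everything.

The lift of a full circle of squared radius `ρ` rises by `4πρ`, and by the isoperimetric
inequality it is a geodesic. Hence `S` contains the whole bubble spanned by two points at vertical
distance `4πρ`. A horizontal segment joining opposite points of the bubble crosses the axis, so the
vertical segment between the two points lies in `S`. Apply this to the chord of the bubble over a
point `z₀` with `|z₀|² = 2ρ`: a bubble of squared radius `ρ/4` spanned by the upper part of the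
chord is tilted, as it is a left translate, and reaches height `(11π/4 + 9/2)ρ > 4πρ`. Averaging
with the opposite point puts a higher axis point into `S`, in fixed proportion, and iterating
exhausts the upper half of the axis. The reflection `(x, y, t) ↦ (x, -y, -t)` gives the lower half,
and bubbles over the axis cover the space.
-/

section ArcLength

lemma eVariationOn_le_of_lipschitzOnWith {E : Type*} [PseudoEMetricSpace E] {f : ℝ → E} {K : ℝ≥0}
    {s : Set ℝ} {u v : ℝ} (hf : LipschitzOnWith K f s) (hs : s ⊆ Icc u v) :
    eVariationOn f s ≤ K * ENNReal.ofReal (v - u) :=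
  calc eVariationOn f s ≤ K * eVariationOn id s := hf.comp_eVariationOn_le (mapsTo_id s)
    _ ≤ K * ENNReal.ofReal (v - u) := by
      rw [← eVariationOn_id_Icc]
      gcongr
      exact eVariationOn.mono _ hs

lemma lipschitzOnWith_variationOnFromTo {E : Type*} [PseudoEMetricSpace E] {f : ℝ → E} {K : ℝ≥0}
    {s : Set ℝ} {a : ℝ} (hf : LipschitzOnWith K f s) (ha : a ∈ s) :
    LipschitzOnWith K (variationOnFromTo f s a) s := by
  have hbv := hf.locallyBoundedVariationOn
  refine LipschitzOnWith.of_le_add_mul K fun x hx y hy => ?_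
  rw [← variationOnFromTo.add hbv ha hy hx]
  gcongr
  rcases le_total x y with hxy | hyx
  · exact (variationOnFromTo.nonpos_of_ge f s hxy).trans (by positivity)
  · have hle := eVariationOn_le_of_lipschitzOnWith (hf.mono inter_subset_left)
      (inter_subset_right (s := s) (t := Icc y x))
    rw [variationOnFromTo.eq_of_le f s hyx, Real.dist_eq, abs_of_nonneg (sub_nonneg.2 hyx)]
    refine ENNReal.toReal_le_of_le_ofReal (by have := sub_nonneg.2 hyx; positivity) ?_
    rwa [ENNReal.ofReal_mul K.coe_nonneg, ENNReal.ofReal_coe_nnreal]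

lemma dist_le_variationOnFromTo_sub {α E : Type*} [LinearOrder α] [PseudoMetricSpace E] {f : α → E}
    {s : Set α} (hf : LocallyBoundedVariationOn f s) {a u v : α} (ha : a ∈ s) (hu : u ∈ s)
    (hv : v ∈ s) (huv : u ≤ v) :
    dist (f v) (f u) ≤ variationOnFromTo f s a v - variationOnFromTo f s a u := by
  rw [variationOnFromTo.sub_right hf ha hv hu, variationOnFromTo.eq_of_le f s huv, dist_edist]
  exact ENNReal.toReal_mono (hf u v hu hv)
    (eVariationOn.edist_le f ⟨hv, huv, le_rfl⟩ ⟨hu, le_rfl, huv⟩)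

lemma norm_le_of_hasDerivAt_of_norm_sub_le {E : Type*} [NormedAddCommGroup E] [NormedSpace ℝ E]
    {f : ℝ → E} {g : ℝ → ℝ} {f' : E} {g' s : ℝ} (hf : HasDerivAt f f' s) (hg : HasDerivAt g g' s)
    (hle : ∀ᶠ u in 𝓝[>] s, ‖f u - f s‖ ≤ g u - g s) : ‖f'‖ ≤ g' := by
  have hIoi : 𝓝[>] s ≤ 𝓝[≠] s := nhdsWithin_mono _ fun _ hx => ne_of_gt hx
  refine le_of_tendsto_of_tendsto (hf.tendsto_slope.mono_left hIoi).norm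
    (hg.tendsto_slope.mono_left hIoi) ?_
  filter_upwards [hle, self_mem_nhdsWithin] with u hu hsu
  have hpos : 0 ≤ (u - s)⁻¹ := inv_nonneg.2 (sub_nonneg.2 (le_of_lt hsu))
  rw [slope_def_module, slope_def_module, norm_smul, Real.norm_of_nonneg hpos, smul_eq_mul]
  gcongr

lemma le_of_ae_deriv_nonneg {f : ℝ → ℝ} {a b : ℝ} (hab : a ≤ b)
    (hf : AbsolutelyContinuousOnInterval f a b)
    (hf' : ∀ᵐ s ∂volume.restrict (Icc a b), 0 ≤ deriv f s) : f a ≤ f b := by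
  rw [← sub_nonneg, ← hf.integral_deriv_eq_sub]
  exact intervalIntegral.integral_nonneg_of_ae_restrict hab hf'

lemma ae_hasDerivAt_deriv_of_lipschitzOnWith {f : ℝ → ℝ} {K : ℝ≥0} {a b : ℝ}
    (hf : LipschitzOnWith K f (Icc a b)) :
    ∀ᵐ s ∂volume.restrict (Icc a b), HasDerivAt f (deriv f s) s := by
  have hdiff := hf.ae_differentiableWithinAt_real measurableSet_Icc
  rw [← restrict_Ioo_eq_restrict_Icc] at hdiff ⊢
  filter_upwards [hdiff, ae_restrict_mem measurableSet_Ioo] with s hs hsI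
  exact (hs.differentiableAt (Icc_mem_nhds hsI.1 hsI.2)).hasDerivAt

end ArcLength

section Isoperimetric

variable {E : Type*} [NormedAddCommGroup E] [InnerProductSpace ℝ E] {J : E → E}

-- Cauchy–Schwarz for `J z - tan θ • z`, of norm `‖z‖ / cos θ`, followed by AM-GM.
lemma two_mul_inner_le_add_tan (hJ : ∀ z, inner ℝ (J z) z = 0) (hJn : ∀ z, ‖J z‖ ≤ ‖z‖) (z v : E)
    {θ w r : ℝ} (hθ : 0 < cos θ) (hw : 0 ≤ w) (hv : ‖v‖ ≤ r) :
    w * (2 * inner ℝ (J z) v) ≤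
      r + w * (1 / cos θ ^ 2 * (w * r) * ‖z‖ ^ 2 + tan θ * (2 * inner ℝ z v)) := by
  have hnorm : ‖J z - tan θ • z‖ ≤ ‖z‖ / cos θ := by
    have hsq : (‖z‖ / cos θ) ^ 2 = ‖z‖ ^ 2 + tan θ ^ 2 * ‖z‖ ^ 2 := by
      rw [tan_eq_sin_div_cos]
      field_simp
      rw [cos_sq_add_sin_sq, mul_one]
    refine le_of_sq_le_sq ?_ (by positivity)
    rw [hsq, norm_sub_sq_real, real_inner_smul_right, hJ, norm_smul, mul_pow, Real.norm_eq_abs,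
      sq_abs, mul_zero, mul_zero, sub_zero]
    gcongr
    exact hJn z
  have hr : 0 ≤ r := (norm_nonneg v).trans hv
  have hCS : inner ℝ (J z) v - tan θ * inner ℝ z v ≤ ‖z‖ / cos θ * r :=
    calc inner ℝ (J z) v - tan θ * inner ℝ z v = inner ℝ (J z - tan θ • z) v := by
          rw [inner_sub_left, real_inner_smul_left]
      _ ≤ ‖J z - tan θ • z‖ * ‖v‖ := real_inner_le_norm _ _
      _ ≤ ‖z‖ / cos θ * r := by gcongr
  calc w * (2 * inner ℝ (J z) v)
      = 2 * w * (inner ℝ (J z) v - tan θ * inner ℝ z v) + w * (tan θ * (2 * inner ℝ z v)) := by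
        ring
    _ ≤ 2 * w * (‖z‖ / cos θ * r) + r * (1 - w * (‖z‖ / cos θ)) ^ 2
          + w * (tan θ * (2 * inner ℝ z v)) := by
        have : 0 ≤ r * (1 - w * (‖z‖ / cos θ)) ^ 2 := by positivity
        gcongr
        linarith [mul_le_mul_of_nonneg_left hCS (by positivity : 0 ≤ 2 * w)]
    _ = r + w * (1 / cos θ ^ 2 * (w * r) * ‖z‖ ^ 2 + tan θ * (2 * inner ℝ z v)) := by
        ring

lemma exists_lipschitzOnWith_tan {c : ℝ} (hc : c < π / 2) :
    ∃ K, LipschitzOnWith K tan (Icc (-c) c) := by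
  refine ContDiffOn.exists_lipschitzOnWith (n := 1) (fun x hx => ?_) one_ne_zero
    (convex_Icc _ _) isCompact_Icc
  exact (contDiffAt_tan.2
    (cos_pos_of_mem_Ioo ⟨by linarith [hx.1], by linarith [hx.2]⟩).ne').contDiffWithinAt

variable {z z' : ℝ → E} {τ l l' : ℝ → ℝ} {a b : ℝ} {K K' : ℝ≥0}

-- In Weierstrass's field for the isoperimetric problem, `l - w τ + w tan (w l) ‖z‖²` is
-- nondecreasing.
lemma mul_sub_le_sub_of_norm_deriv_le (hJ : ∀ z, inner ℝ (J z) z = 0) (hJn : ∀ z, ‖J z‖ ≤ ‖z‖)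
    (hab : a ≤ b) (hz : LipschitzOnWith K z (Icc a b)) (hl : LipschitzOnWith K' l (Icc a b))
    (hτ : AbsolutelyContinuousOnInterval τ a b)
    (hz' : ∀ᵐ s ∂volume.restrict (Icc a b), HasDerivAt z (z' s) s)
    (hl' : ∀ᵐ s ∂volume.restrict (Icc a b), HasDerivAt l (l' s) s)
    (hτ' : ∀ᵐ s ∂volume.restrict (Icc a b), HasDerivAt τ (2 * inner ℝ (J (z s)) (z' s)) s)
    (hzl' : ∀ᵐ s ∂volume.restrict (Icc a b), ‖z' s‖ ≤ l' s)
    (hza : z a = 0) (hzb : z b = 0) {w c : ℝ} (hw : 0 ≤ w) (hwc : w * c < π / 2)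
    (hlc : MapsTo l (Icc a b) (Icc (-c) c)) :
    w * (τ b - τ a) ≤ l b - l a := by
  have hθ : MapsTo (fun s => w * l s) (Icc a b) (Icc (-(w * c)) (w * c)) := fun s hs =>
    ⟨by nlinarith [(hlc hs).1], by nlinarith [(hlc hs).2]⟩
  have hF : AbsolutelyContinuousOnInterval
      (fun s => l s - w * τ s + w * (tan (w * l s) * ‖z s‖ ^ 2)) a b := by
    obtain ⟨C, hC⟩ := exists_lipschitzOnWith_tan hwc
    have hθ_lip := ((lipschitzWith_smul w).comp_lipschitzOnWith hl)
    have htan := hC.comp hθ_lip hθ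
    have hnorm := lipschitzWith_one_norm.comp_lipschitzOnWith hz
    rw [← uIcc_of_le hab] at hl htan hnorm
    have hnorm := hnorm.absolutelyContinuousOnInterval
    simp only [sq]
    exact (hl.absolutelyContinuousOnInterval.fun_sub (hτ.const_mul w)).fun_add
      ((htan.absolutelyContinuousOnInterval.fun_mul (hnorm.fun_mul hnorm)).const_mul w)
  have hF' : ∀ᵐ s ∂volume.restrict (Icc a b),
      0 ≤ deriv (fun s => l s - w * τ s + w * (tan (w * l s) * ‖z s‖ ^ 2)) s := by
    filter_upwards [hz', hl', hτ', hzl', ae_restrict_mem measurableSet_Icc]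
      with s hzs hls hτs hspeed hs
    have hcos : 0 < cos (w * l s) :=
      cos_pos_of_mem_Ioo ⟨by linarith [(hθ hs).1], by linarith [(hθ hs).2]⟩
    have htan : HasDerivAt (fun u => tan (w * l u)) (1 / cos (w * l s) ^ 2 * (w * l' s)) s :=
      HasDerivAt.comp (h := fun u => w * l u) s (hasDerivAt_tan hcos.ne') (hls.const_mul w)
    have hFs := (hls.sub (hτs.const_mul w)).add ((htan.mul hzs.norm_sq).const_mul w)
    refine le_of_le_of_eq ?_ hFs.deriv.symm
    linarith [two_mul_inner_le_add_tan hJ hJn (z s) (z' s) hcos hw hspeed]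
  have hFab := le_of_ae_deriv_nonneg hab hF hF'
  simp only [hza, hzb, norm_zero] at hFab
  linarith

-- Take for `l` the arc length of `z` measured from the midpoint of the curve.
lemma mul_sub_le_length_of_mul_length_lt_pi (hJ : ∀ z, inner ℝ (J z) z = 0)
    (hJn : ∀ z, ‖J z‖ ≤ ‖z‖) (hab : a ≤ b) (hz : LipschitzOnWith K z (Icc a b))
    (hτ : AbsolutelyContinuousOnInterval τ a b)
    (hz' : ∀ᵐ s ∂volume.restrict (Icc a b), HasDerivAt z (z' s) s)
    (hτ' : ∀ᵐ s ∂volume.restrict (Icc a b), HasDerivAt τ (2 * inner ℝ (J (z s)) (z' s)) s)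
    (hza : z a = 0) (hzb : z b = 0) {w : ℝ} (hw : 0 ≤ w)
    (hwL : w * (eVariationOn z (Icc a b)).toReal < π) :
    w * (τ b - τ a) ≤ (eVariationOn z (Icc a b)).toReal := by
  set L := (eVariationOn z (Icc a b)).toReal
  set l := variationOnFromTo z (Icc a b) a with hl
  have ha : a ∈ Icc a b := left_mem_Icc.2 hab
  have hb : b ∈ Icc a b := right_mem_Icc.2 hab
  have hbv := hz.locallyBoundedVariationOn
  have hla : l a = 0 := variationOnFromTo.self _ _ _
  have hlb : l b = L := by rw [hl, variationOnFromTo.eq_of_le _ _ hab, inter_self]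
  have hl_lip : LipschitzOnWith K l (Icc a b) := lipschitzOnWith_variationOnFromTo hz ha
  have hl_mono : MonotoneOn l (Icc a b) := variationOnFromTo.monotoneOn hbv ha
  have hl' := ae_hasDerivAt_deriv_of_lipschitzOnWith hl_lip
  have hzl' : ∀ᵐ s ∂volume.restrict (Icc a b), ‖z' s‖ ≤ deriv l s := by
    rw [← restrict_Ioo_eq_restrict_Icc] at hz' hl' ⊢
    filter_upwards [hz', hl', ae_restrict_mem measurableSet_Ioo] with s hzs hls hs
    refine norm_le_of_hasDerivAt_of_norm_sub_le hzs hls ?_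
    filter_upwards [Ioo_mem_nhdsGT hs.2] with u hu
    rw [← dist_eq_norm]
    exact dist_le_variationOnFromTo_sub hbv ha (Ioo_subset_Icc_self hs)
      ⟨hs.1.le.trans hu.1.le, hu.2.le⟩ hu.1.le
  have hmem : MapsTo (fun s => l s - L / 2) (Icc a b) (Icc (-(L / 2)) (L / 2)) := fun s hs =>
    ⟨by linarith [hla ▸ hl_mono ha hs hs.1], by linarith [hlb ▸ hl_mono hs hb hs.2]⟩
  have hshift := mul_sub_le_sub_of_norm_deriv_le hJ hJn hab hz
    (hl_lip.sub (LipschitzWith.const (L / 2)).lipschitzOnWith) hτ hz'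
    (hl'.mono fun s hs => hs.sub_const (L / 2)) hτ' hzl' hza hzb hw (by linarith) hmem
  linarith

theorem isoperimetric_inequality (hJ : ∀ z, inner ℝ (J z) z = 0) (hJn : ∀ z, ‖J z‖ ≤ ‖z‖)
    (hab : a ≤ b) (hz : LipschitzOnWith K z (Icc a b))
    (hτ : AbsolutelyContinuousOnInterval τ a b)
    (hz' : ∀ᵐ s ∂volume.restrict (Icc a b), HasDerivAt z (z' s) s)
    (hτ' : ∀ᵐ s ∂volume.restrict (Icc a b), HasDerivAt τ (2 * inner ℝ (J (z s)) (z' s)) s)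
    (hza : z a = 0) (hzb : z b = 0) :
    π * (τ b - τ a) ≤ (eVariationOn z (Icc a b)).toReal ^ 2 := by
  set L := (eVariationOn z (Icc a b)).toReal
  have hL0 : 0 ≤ L := ENNReal.toReal_nonneg
  have hgt : ∀ M ∈ Ioi L, π * (τ b - τ a) ≤ L * M := fun M hM => by
    have hM0 : 0 < M := hL0.trans_lt hM
    have hlt : π / M * L < π := by
      rw [div_mul_eq_mul_div, div_lt_iff₀ hM0]
      exact mul_lt_mul_of_pos_left hM pi_pos
    have := mul_sub_le_length_of_mul_length_lt_pi hJ hJn hab hz hτ hz' hτ' hza hzb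
      (by positivity) hlt
    rwa [div_mul_eq_mul_div, div_le_iff₀ hM0] at this
  have hlim : Tendsto (fun M => L * M) (𝓝[>] L) (𝓝 (L ^ 2)) := by
    rw [sq]
    exact (continuous_const_mul L).continuousWithinAt.tendsto
  exact ge_of_tendsto hlim (eventually_mem_nhdsWithin.mono hgt)

end Isoperimetric

section Curves

variable {n : ℕ} {γ : ℝ → Hpt n} {a b : ℝ}

/-- The projection `hproj` as a continuous linear map. -/
def hprojCLM (n : ℕ) : Hpt n →L[ℝ] EuclideanSpace ℝ (Fin n ⊕ Fin n) :=
  LinearMap.toContinuousLinearMap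
    { toFun := hproj
      map_add' := fun p q => by ext (i | i) <;> simp [hproj]
      map_smul' := fun c p => by ext (i | i) <;> simp [hproj] }

lemma hprojCLM_apply (p : Hpt n) : hprojCLM n p = hproj p := rfl

lemma norm_hproj_sq (p : Hpt n) : ‖hproj p‖ ^ 2 = ∑ j, (p.1 j ^ 2 + p.2.1 j ^ 2) := by
  simp [hproj, EuclideanSpace.norm_sq_eq, Fintype.sum_sum_type, Finset.sum_add_distrib]

/-- The rotation `(x, y) ↦ (y, -x)` of `ℝ^{2n}` by a quarter turn in each coordinate plane
`(x j, y j)`. -/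
def quarterTurn (z : EuclideanSpace ℝ (Fin n ⊕ Fin n)) : EuclideanSpace ℝ (Fin n ⊕ Fin n) :=
  hproj (fun j => z (Sum.inr j), fun j => -z (Sum.inl j), 0)

lemma norm_quarterTurn (z : EuclideanSpace ℝ (Fin n ⊕ Fin n)) : ‖quarterTurn z‖ = ‖z‖ := by
  simp [quarterTurn, hproj, EuclideanSpace.norm_eq, Fintype.sum_sum_type, add_comm]

lemma inner_quarterTurn (z w : EuclideanSpace ℝ (Fin n ⊕ Fin n)) :
    inner ℝ (quarterTurn z) w =
      ∑ j, (w (Sum.inl j) * z (Sum.inr j) - w (Sum.inr j) * z (Sum.inl j)) := by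
  rw [Finset.sum_sub_distrib]
  simp [quarterTurn, hproj, PiLp.inner_apply, Fintype.sum_sum_type, sub_eq_add_neg]

lemma inner_quarterTurn_self (z : EuclideanSpace ℝ (Fin n ⊕ Fin n)) :
    inner ℝ (quarterTurn z) z = 0 := by
  rw [inner_quarterTurn]
  exact Finset.sum_eq_zero fun j _ => by ring

/-- The symplectic form `(p, v) ↦ ∑ⱼ (v_{x,j} p_{y,j} - v_{y,j} p_{x,j})` on horizontal parts, as a
functional of `v`: a curve `γ` is horizontal when `(γ').2.2 = 2 * sympForm γ γ'`, and the group
law is `p * v = p + v + (0, 0, 2 * sympForm p v)`. -/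
def sympForm (p : Hpt n) : Hpt n →L[ℝ] ℝ :=
  innerSL ℝ (quarterTurn (hproj p)) ∘L hprojCLM n

lemma sympForm_apply (p v : Hpt n) :
    sympForm p v = ∑ j, (v.1 j * p.2.1 j - v.2.1 j * p.1 j) :=
  inner_quarterTurn _ _

lemma sympForm_self (p : Hpt n) : sympForm p p = 0 :=
  inner_quarterTurn_self _

lemma sympForm_add_left (p q v : Hpt n) : sympForm (p + q) v = sympForm p v + sympForm q v := by
  simp only [sympForm_apply, ← Finset.sum_add_distrib, Prod.fst_add, Prod.snd_add, Pi.add_apply]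
  exact Finset.sum_congr rfl fun j _ => by ring

lemma sympForm_neg_left (p v : Hpt n) : sympForm (-p) v = -sympForm p v := by
  rw [eq_neg_iff_add_eq_zero, ← sympForm_add_left, neg_add_cancel]
  simp [sympForm_apply]

lemma sympForm_vertical_left (t : ℝ) (v : Hpt n) : sympForm (0, 0, t) v = 0 := by
  simp [sympForm_apply]

lemma sympForm_vertical_right (p : Hpt n) (t : ℝ) : sympForm p (0, 0, t) = 0 := by
  simp [sympForm_apply]

lemma ccDist_le_hLength (hγ : IsHorizontal γ a b) : ccDist (γ a) (γ b) ≤ hLength γ a b :=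
  iInf_le_of_le γ <| iInf₂_le_of_le a b <| iInf_le_of_le hγ <|
    iInf_le_of_le rfl <| iInf_le _ rfl

lemma le_ccDist_iff {p q : Hpt n} {r : ℝ≥0∞} : r ≤ ccDist p q ↔
    ∀ γ a b, IsHorizontal γ a b → γ a = p → γ b = q → r ≤ hLength γ a b := by
  simp only [ccDist, le_iInf_iff]

lemma isGeodesicOn_of_forall_hLength_le (hγ : IsHorizontal γ a b)
    (hmin : ∀ η c d, IsHorizontal η c d → η c = γ a → η d = γ b →
      hLength γ a b ≤ hLength η c d) : IsGeodesicOn γ a b :=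
  ⟨hγ, le_antisymm (le_ccDist_iff.2 hmin) (ccDist_le_hLength hγ)⟩

lemma edist_hproj_le_hLength (hab : a ≤ b) :
    edist (hproj (γ a)) (hproj (γ b)) ≤ hLength γ a b :=
  eVariationOn.edist_le _ (left_mem_Icc.2 hab) (right_mem_Icc.2 hab)

lemma IsHorizontal.hLength_ne_top (hγ : IsHorizontal γ a b) : hLength γ a b ≠ ∞ := by
  obtain ⟨-, ⟨K, hK⟩, -⟩ := hγ
  have hlip := (hprojCLM n).lipschitz.comp_lipschitzOnWith hK
  exact ne_top_of_le_ne_top (ENNReal.mul_ne_top ENNReal.coe_ne_top ENNReal.ofReal_ne_top)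
    (eVariationOn_le_of_lipschitzOnWith hlip subset_rfl)

lemma IsHorizontal.pi_mul_le_hLength_sq (hγ : IsHorizontal γ a b) (ha : hproj (γ a) = 0)
    (hb : hproj (γ b) = 0) :
    π * ((γ b).2.2 - (γ a).2.2) ≤ (hLength γ a b).toReal ^ 2 := by
  obtain ⟨hab, ⟨K, hK⟩, γ', hγ', ht⟩ := hγ
  have hz := (hprojCLM n).lipschitz.comp_lipschitzOnWith hK
  have hτ := (LipschitzWith.prod_snd.comp LipschitzWith.prod_snd).comp_lipschitzOnWith hK
  rw [← uIcc_of_le hab] at hτ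
  refine isoperimetric_inequality (z' := fun s => hproj (γ' s)) inner_quarterTurn_self
    (fun z => (norm_quarterTurn z).le) hab hz hτ.absolutelyContinuousOnInterval ?_ ?_ ha hb
  · filter_upwards [hγ'] with s hs
    exact (hprojCLM n).hasFDerivAt.comp_hasDerivAt s hs
  · filter_upwards [hγ', ht] with s hs hts
    have hs₂ := (hasFDerivAt_snd.comp _ hasFDerivAt_snd).comp_hasDerivAt s hs
    refine hs₂.congr_deriv (hts.trans ?_)
    rw [← sympForm_apply]
    rfl

lemma isHorizontal_of_hasDerivAt {γ' : ℝ → Hpt n} (hab : a ≤ b)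
    (hγ : ∀ s, HasDerivAt γ (γ' s) s) (hcont : Continuous γ')
    (ht : ∀ s, (γ' s).2.2 = 2 * sympForm (γ s) (γ' s)) : IsHorizontal γ a b := by
  have hC1 : ContDiff ℝ 1 γ := contDiff_one_iff_deriv.2
    ⟨fun s => (hγ s).differentiableAt, by rwa [funext fun s => (hγ s).deriv]⟩
  exact ⟨hab, hC1.contDiffOn.exists_lipschitzOnWith one_ne_zero (convex_Icc a b) isCompact_Icc,
    γ', .of_forall hγ, .of_forall fun s => by rw [ht, sympForm_apply]⟩

lemma hLength_le_of_hasDerivAt {γ' : ℝ → Hpt n} (hγ : ∀ s, HasDerivAt γ (γ' s) s) {K : ℝ}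
    (hK : ∀ s, ‖hproj (γ' s)‖ ≤ K) : hLength γ a b ≤ ENNReal.ofReal (K * (b - a)) := by
  have hK0 : 0 ≤ K := (norm_nonneg _).trans (hK a)
  have hlip : LipschitzOnWith K.toNNReal (fun s => hproj (γ s)) (Icc a b) :=
    (convex_Icc a b).lipschitzOnWith_of_nnnorm_hasDerivWithin_le
      (fun s _ => ((hprojCLM n).hasFDerivAt.comp_hasDerivAt s (hγ s)).hasDerivWithinAt)
      fun s _ => NNReal.le_toNNReal_of_coe_le (hK s)
  rw [ENNReal.ofReal_mul hK0]
  exact eVariationOn_le_of_lipschitzOnWith hlip subset_rfl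

lemma isGeodesicOn_const (p : Hpt n) (hab : a ≤ b) : IsGeodesicOn (fun _ => p) a b := by
  have hderiv : ∀ s : ℝ, HasDerivAt (fun _ => p) 0 s := fun s => hasDerivAt_const s p
  refine isGeodesicOn_of_forall_hLength_le
    (isHorizontal_of_hasDerivAt hab hderiv continuous_const (by simp)) fun η c d _ _ _ => ?_
  refine (hLength_le_of_hasDerivAt (K := 0) hderiv fun s => ?_).trans (by simp)
  rw [← hprojCLM_apply, map_zero, norm_zero]

lemma isGeodesicOn_line (x y : Fin n → ℝ) (t : ℝ) (hab : a ≤ b) :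
    IsGeodesicOn (fun s : ℝ => (s • x, s • y, t)) a b := by
  set γ : ℝ → Hpt n := fun s => (s • x, s • y, t)
  have hderiv : ∀ s : ℝ, HasDerivAt γ (x, y, 0) s := fun s => by
    simpa using ((hasDerivAt_id s).smul_const x).prodMk
      (((hasDerivAt_id s).smul_const y).prodMk (hasDerivAt_const s t))
  have hhor : IsHorizontal γ a b := by
    refine isHorizontal_of_hasDerivAt hab hderiv continuous_const fun s => ?_
    rw [sympForm_apply, Finset.sum_eq_zero fun j _ => ?_, mul_zero]
    simp only [γ, Pi.smul_apply, smul_eq_mul]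
    ring
  refine isGeodesicOn_of_forall_hLength_le hhor fun η c d hη hc hd => ?_
  calc hLength γ a b ≤ ENNReal.ofReal (‖hproj (x, y, (0 : ℝ))‖ * (b - a)) :=
        hLength_le_of_hasDerivAt hderiv fun _ => le_rfl
    _ = edist (hproj (γ a)) (hproj (γ b)) := by
        have hsub : γ b - γ a = (b - a) • (x, y, (0 : ℝ)) := by simp [γ, sub_smul]
        rw [edist_comm, edist_dist, dist_eq_norm]
        simp only [← hprojCLM_apply]
        rw [← map_sub, hsub, map_smul, norm_smul, Real.norm_of_nonneg (sub_nonneg.2 hab), mul_comm]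
    _ ≤ hLength η c d := by
        rw [← hc, ← hd]
        exact edist_hproj_le_hLength hη.1

end Curves

section Isometries

variable {n : ℕ} {φ ψ : Hpt n → Hpt n}

/-- Maps of `ℍⁿ` carrying horizontal curves to horizontal curves of the same length; they are used
to move geodesics around. -/
structure IsHorizontalIsometry (φ : Hpt n → Hpt n) : Prop where
  isHorizontal_comp {γ : ℝ → Hpt n} {a b : ℝ} (hγ : IsHorizontal γ a b) :
    IsHorizontal (φ ∘ γ) a b
  hLength_comp (γ : ℝ → Hpt n) (a b : ℝ) : hLength (φ ∘ γ) a b = hLength γ a b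

lemma isHorizontalIsometry_affine (c : Hpt n) (A : Hpt n →L[ℝ] Hpt n)
    (hA : ∀ p v, v.2.2 = 2 * sympForm p v → (A v).2.2 = 2 * sympForm (c + A p) (A v))
    (hnorm : ∀ v, ‖hproj (A v)‖ = ‖hproj v‖) : IsHorizontalIsometry fun p => c + A p where
  isHorizontal_comp := by
    rintro γ a b ⟨hab, ⟨K, hK⟩, γ', hγ', ht⟩
    refine ⟨hab, ⟨_, ((LipschitzWith.const c).add A.lipschitz).comp_lipschitzOnWith hK⟩,
      fun s => A (γ' s), ?_, ?_⟩
    · filter_upwards [hγ'] with s hs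
      exact (A.hasFDerivAt.comp_hasDerivAt s hs).const_add c
    · filter_upwards [ht] with s hs
      rw [← sympForm_apply] at hs ⊢
      exact hA _ _ hs
  hLength_comp γ a b := by
    have hedist : ∀ p q, edist (hproj (c + A p)) (hproj (c + A q)) = edist (hproj p) (hproj q) :=
      fun p q => by
        simp only [edist_dist, dist_eq_norm, ← hprojCLM_apply, ← map_sub, add_sub_add_left_eq_sub]
        rw [hprojCLM_apply, hnorm, hprojCLM_apply]
    simp only [hLength, eVariationOn, Function.comp_apply, hedist]

lemma IsHorizontalIsometry.ccDist_le (hφ : IsHorizontalIsometry φ) (p q : Hpt n) :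
    ccDist (φ p) (φ q) ≤ ccDist p q := by
  refine le_ccDist_iff.2 fun γ a b hγ hp hq => ?_
  calc ccDist (φ p) (φ q) = ccDist ((φ ∘ γ) a) ((φ ∘ γ) b) := by
        rw [Function.comp_apply, Function.comp_apply, hp, hq]
    _ ≤ hLength (φ ∘ γ) a b := ccDist_le_hLength (hφ.isHorizontal_comp hγ)
    _ = hLength γ a b := hφ.hLength_comp γ a b

lemma IsGeodesicOn.comp {γ : ℝ → Hpt n} {a b : ℝ} (hγ : IsGeodesicOn γ a b)
    (hφ : IsHorizontalIsometry φ) (hψ : IsHorizontalIsometry ψ)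
    (hψφ : Function.LeftInverse ψ φ) : IsGeodesicOn (φ ∘ γ) a b := by
  refine ⟨hφ.isHorizontal_comp hγ.1,
    le_antisymm ?_ (ccDist_le_hLength (hφ.isHorizontal_comp hγ.1))⟩
  calc hLength (φ ∘ γ) a b = ccDist (ψ (φ (γ a))) (ψ (φ (γ b))) := by
        rw [hφ.hLength_comp, hγ.2, hψφ, hψφ]
    _ ≤ ccDist (φ (γ a)) (φ (γ b)) := hψ.ccDist_le _ _

lemma GeodConvexSet.preimage {S : Set (Hpt n)} (hS : GeodConvexSet S)
    (hφ : IsHorizontalIsometry φ) (hψ : IsHorizontalIsometry ψ)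
    (hψφ : Function.LeftInverse ψ φ) : GeodConvexSet (φ ⁻¹' S) := by
  intro p hp q hq γ a b hγ ha hb s hs
  exact hS _ hp _ hq _ a b (hγ.comp hφ hψ hψφ) (congrArg φ ha) (congrArg φ hb) s hs

/-- The left translation `q ↦ p * q` of the Heisenberg group, which reduces statements about
arbitrary base points to the origin. -/
def leftTranslate (p q : Hpt n) : Hpt n := p + q + (0, 0, 2 * sympForm p q)

lemma leftTranslate_neg_leftTranslate (p : Hpt n) :
    Function.LeftInverse (leftTranslate (-p)) (leftTranslate p) := by
  intro q
  simp only [leftTranslate, map_add, sympForm_neg_left, sympForm_self, sympForm_vertical_right]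
  ext j
  · simp
  · simp
  · simp only [Prod.snd_add, Prod.snd_neg]
    ring

lemma isHorizontalIsometry_leftTranslate (p : Hpt n) : IsHorizontalIsometry (leftTranslate p) := by
  let A : Hpt n →L[ℝ] Hpt n := .id ℝ _ + .inr ℝ _ _ ∘L .inr ℝ _ _ ∘L ((2 : ℝ) • sympForm p)
  have hA : ∀ q, A q = q + (0, 0, 2 * sympForm p q) := fun q => rfl
  have hproj_A : ∀ q, hproj (A q) = hproj q := fun q => by simp [hA, hproj]
  have haffine : leftTranslate p = fun q => p + A q := funext fun q => add_assoc _ _ _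
  rw [haffine]
  refine isHorizontalIsometry_affine p A (fun q v hv => ?_) fun v => by rw [hproj_A]
  simp only [hA, map_add, sympForm_add_left, sympForm_vertical_left, sympForm_vertical_right]
  rw [Prod.snd_add, Prod.snd_add, hv]
  ring

lemma leftTranslate_vertical (p : Hpt n) (t : ℝ) : leftTranslate p (0, 0, t) = p + (0, 0, t) := by
  simp [leftTranslate, sympForm_vertical_right]

lemma GeodConvexSet.preimage_leftTranslate {S : Set (Hpt n)} (hS : GeodConvexSet S) (p : Hpt n) :
    GeodConvexSet (leftTranslate p ⁻¹' S) :=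
  hS.preimage (isHorizontalIsometry_leftTranslate p) (isHorizontalIsometry_leftTranslate (-p))
    (leftTranslate_neg_leftTranslate p)

/-- The reflection `(x, y, t) ↦ (x, -y, -t)`, which reverses the vertical axis. -/
def reflect (p : Hpt n) : Hpt n := (p.1, -p.2.1, -p.2.2)

lemma reflect_involutive : Function.Involutive (reflect (n := n)) := fun p => by simp [reflect]

lemma isHorizontalIsometry_reflect : IsHorizontalIsometry (reflect (n := n)) := by
  let A : Hpt n →L[ℝ] Hpt n := (ContinuousLinearMap.fst ℝ _ _).prod
    ((-ContinuousLinearMap.fst ℝ _ _ ∘L ContinuousLinearMap.snd ℝ _ _).prod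
      (-ContinuousLinearMap.snd ℝ _ _ ∘L ContinuousLinearMap.snd ℝ _ _))
  have hA : reflect = fun p => (0 : Hpt n) + A p := funext fun p => (zero_add _).symm
  rw [hA]
  refine isHorizontalIsometry_affine 0 A (fun p v hv => ?_) fun v => ?_
  · have hsymp : sympForm (0 + A p) (A v) = -sympForm p v := by
      simp only [sympForm_apply, ← Finset.sum_neg_distrib, zero_add]
      exact Finset.sum_congr rfl fun j _ => by simp [A]; ring
    calc -v.2.2 = 2 * -sympForm p v := by rw [hv, mul_neg]
      _ = 2 * sympForm (0 + A p) (A v) := by rw [hsymp]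
  · rw [← sq_eq_sq₀ (norm_nonneg _) (norm_nonneg _), norm_hproj_sq, norm_hproj_sq]
    simp [A]

end Isometries

section Bubbles

variable {n : ℕ} {S : Set (Hpt n)}

/-- The horizontal lift, starting at the origin, of the circle through `0` with centre `(-p, -q)`,
traversed at speed `|(p, q)|`. -/
def circleLift (p q : Fin n → ℝ) (s : ℝ) : Hpt n :=
  ((cos s - 1) • p + sin s • q, (cos s - 1) • q - sin s • p,
    2 * (∑ j, (p j ^ 2 + q j ^ 2)) * (s - sin s))

lemma hasDerivAt_circleLift (p q : Fin n → ℝ) (s : ℝ) :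
    HasDerivAt (circleLift p q) (-sin s • p + cos s • q, -sin s • q - cos s • p,
      2 * (∑ j, (p j ^ 2 + q j ^ 2)) * (1 - cos s)) s := by
  have hcos : HasDerivAt (fun s => cos s - 1) (-sin s) s := (hasDerivAt_cos s).sub_const 1
  have hsin := hasDerivAt_sin s
  exact ((hcos.smul_const p).add (hsin.smul_const q)).prodMk
    (((hcos.smul_const q).sub (hsin.smul_const p)).prodMk
      (((hasDerivAt_id s).sub hsin).const_mul _))

lemma isHorizontal_circleLift (p q : Fin n → ℝ) {a b : ℝ} (hab : a ≤ b) :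
    IsHorizontal (circleLift p q) a b := by
  refine isHorizontal_of_hasDerivAt hab (hasDerivAt_circleLift p q) (by fun_prop) fun s => ?_
  rw [sympForm_apply, mul_assoc, Finset.sum_mul]
  refine congrArg (2 * ·) (Finset.sum_congr rfl fun j _ => ?_)
  simp only [circleLift, Pi.add_apply, Pi.sub_apply, Pi.smul_apply, smul_eq_mul]
  linear_combination (-(p j ^ 2 + q j ^ 2)) * sin_sq_add_cos_sq s

lemma hLength_circleLift_le (p q : Fin n → ℝ) (a b : ℝ) :
    hLength (circleLift p q) a b ≤ ENNReal.ofReal (√(∑ j, (p j ^ 2 + q j ^ 2)) * (b - a)) := by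
  refine hLength_le_of_hasDerivAt (hasDerivAt_circleLift p q) fun s => Real.le_sqrt_of_sq_le ?_
  rw [norm_hproj_sq]
  refine Finset.sum_le_sum fun j _ => le_of_eq ?_
  simp only [Pi.add_apply, Pi.sub_apply, Pi.smul_apply, smul_eq_mul]
  linear_combination (p j ^ 2 + q j ^ 2) * sin_sq_add_cos_sq s

lemma circleLift_zero (p q : Fin n → ℝ) : circleLift p q 0 = 0 := by
  simp [circleLift]

lemma circleLift_two_pi (p q : Fin n → ℝ) :
    circleLift p q (2 * π) = (0, 0, 4 * π * ∑ j, (p j ^ 2 + q j ^ 2)) := by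
  simp only [circleLift, cos_two_pi, sin_two_pi, sub_self, zero_smul, add_zero, sub_zero]
  congr 2
  ring

theorem isGeodesicOn_circleLift (p q : Fin n → ℝ) :
    IsGeodesicOn (circleLift p q) 0 (2 * π) := by
  have hhor := isHorizontal_circleLift p q two_pi_pos.le
  refine isGeodesicOn_of_forall_hLength_le hhor fun η c d hη hc hd => ?_
  rw [circleLift_zero] at hc
  rw [circleLift_two_pi] at hd
  set ρ := ∑ j, (p j ^ 2 + q j ^ 2)
  have hρ0 : 0 ≤ ρ := Finset.sum_nonneg fun j _ => by positivity
  have hiso := hη.pi_mul_le_hLength_sq (by rw [hc, ← hprojCLM_apply, map_zero])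
    (by rw [hd]; ext (j | j) <;> simp [hproj])
  have hle : √ρ * (2 * π - 0) ≤ (hLength η c d).toReal := by
    refine le_of_sq_le_sq ?_ ENNReal.toReal_nonneg
    calc (√ρ * (2 * π - 0)) ^ 2 = π * ((η d).2.2 - (η c).2.2) := by
          rw [mul_pow, Real.sq_sqrt hρ0, hc, hd, Prod.snd_zero, Prod.snd_zero]
          ring
      _ ≤ (hLength η c d).toReal ^ 2 := hiso
  calc hLength (circleLift p q) 0 (2 * π) ≤ ENNReal.ofReal (√ρ * (2 * π - 0)) :=
        hLength_circleLift_le p q 0 (2 * π)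
    _ ≤ ENNReal.ofReal (hLength η c d).toReal := ENNReal.ofReal_le_ofReal hle
    _ = hLength η c d := ENNReal.ofReal_toReal hη.hLength_ne_top

lemma exists_circleLift_eq {u v : Fin n → ℝ} {ρ s : ℝ} (hs : s ∈ Ioo 0 (2 * π))
    (huv : ∑ j, (u j ^ 2 + v j ^ 2) = 2 * ρ * (1 - cos s)) :
    ∃ p q : Fin n → ℝ, ∑ j, (p j ^ 2 + q j ^ 2) = ρ ∧
      circleLift p q s = (u, v, 2 * ρ * (s - sin s)) := by
  have hcos : 1 - cos s ≠ 0 := fun h => hs.1.ne' <|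
    (cos_eq_one_iff_of_lt_of_lt (by linarith [hs.1, pi_pos]) hs.2).1 (by linarith)
  set κ := sin s / (2 * (1 - cos s)) with hκ
  have hκ_cos : (1 - cos s) * κ = sin s / 2 := by rw [hκ]; field_simp
  have hκ_sin : sin s * κ = (1 + cos s) / 2 := by
    rw [hκ]
    field_simp
    linear_combination sin_sq_add_cos_sq s
  have hsum : ∑ j, ((-u j / 2 - κ * v j) ^ 2 + (-v j / 2 + κ * u j) ^ 2) = ρ := by
    calc _ = (1 / 4 + κ ^ 2) * ∑ j, (u j ^ 2 + v j ^ 2) := by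
          rw [Finset.mul_sum]
          exact Finset.sum_congr rfl fun j _ => by ring
      _ = ρ := by
          rw [huv]
          linear_combination (2 * ρ * κ) * hκ_cos + ρ * hκ_sin
  refine ⟨fun j => -u j / 2 - κ * v j, fun j => -v j / 2 + κ * u j, hsum, ?_⟩
  rw [circleLift, hsum]
  ext j
  · simp only [Pi.add_apply, Pi.smul_apply, smul_eq_mul]
    linear_combination u j * hκ_sin + v j * hκ_cos
  · simp only [Pi.sub_apply, Pi.smul_apply, smul_eq_mul]
    linear_combination v j * hκ_sin - u j * hκ_cos
  · rfl

theorem GeodConvexSet.leftTranslate_bubble_mem (hS : GeodConvexSet S) {b : Hpt n} {ρ s : ℝ}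
    (hb : b ∈ S) (hb' : b + (0, 0, 4 * π * ρ) ∈ S) {u v : Fin n → ℝ} (hs : s ∈ Ioo 0 (2 * π))
    (huv : ∑ j, (u j ^ 2 + v j ^ 2) = 2 * ρ * (1 - cos s)) :
    leftTranslate b (u, v, 2 * ρ * (s - sin s)) ∈ S := by
  obtain ⟨p, q, hρ, hpq⟩ := exists_circleLift_eq hs huv
  rw [← hpq, ← mem_preimage]
  refine hS.preimage_leftTranslate b (0, 0, 0) ?_ (0, 0, 4 * π * ρ) ?_ _ 0 (2 * π)
    (isGeodesicOn_circleLift p q) (circleLift_zero p q) ?_ s (Ioo_subset_Icc_self hs)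
  · rw [mem_preimage, leftTranslate_vertical]
    exact (add_zero b).symm ▸ hb
  · rwa [mem_preimage, leftTranslate_vertical]
  · rw [circleLift_two_pi, hρ]

lemma GeodConvexSet.axis_bubble_mem (hS : GeodConvexSet S) {a ρ s : ℝ}
    (ha : (0, 0, a) ∈ S) (hb : (0, 0, a + 4 * π * ρ) ∈ S) {u v : Fin n → ℝ}
    (hs : s ∈ Ioo 0 (2 * π)) (huv : ∑ j, (u j ^ 2 + v j ^ 2) = 2 * ρ * (1 - cos s)) :
    (u, v, a + 2 * ρ * (s - sin s)) ∈ S := by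
  simpa [leftTranslate, sympForm_vertical_left] using
    hS.leftTranslate_bubble_mem ha (by simpa using hb) hs huv

lemma GeodConvexSet.axis_mem_of_neg_mem (hS : GeodConvexSet S) {x y : Fin n → ℝ} {t : ℝ}
    (h : (x, y, t) ∈ S) (hneg : (-x, -y, t) ∈ S) : (0, 0, t) ∈ S := by
  simpa using hS _ hneg _ h _ (-1) 1 (isGeodesicOn_line x y t (by norm_num)) (by simp) (by simp) 0
    (by norm_num)

end Bubbles

section Filling

variable {n : ℕ} {S : Set (Hpt n)}

lemma exists_sum_sq_eq {ι : Type*} [Fintype ι] [Nonempty ι] {r : ℝ} (hr : 0 ≤ r) :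
    ∃ x : ι → ℝ, ∑ j, x j ^ 2 = r := by
  classical
  refine ⟨Pi.single (Classical.arbitrary ι) √r, ?_⟩
  rw [Fintype.sum_eq_single (Classical.arbitrary ι) fun j hj => by simp [hj], Pi.single_eq_same,
    Real.sq_sqrt hr]

lemma exists_circleLift_height_eq {h H : ℝ} (hh : 0 < h) (hH : h < H) :
    ∃ s ∈ Ioo 0 (2 * π), 2 * (H / (4 * π)) * (s - sin s) = h := by
  have hcont : ContinuousOn (fun s => 2 * (H / (4 * π)) * (s - sin s)) (Icc 0 (2 * π)) := by
    fun_prop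
  refine intermediate_value_Ioo two_pi_pos.le hcont ⟨by simpa using hh, ?_⟩
  rw [sin_two_pi, sub_zero]
  field_simp
  linarith

lemma GeodConvexSet.axis_ordConnected [NeZero n] (hS : GeodConvexSet S) :
    OrdConnected {t : ℝ | ((0 : Fin n → ℝ), (0 : Fin n → ℝ), t) ∈ S} := by
  refine ordConnected_of_Ioo fun a ha b hb _ c hc => ?_
  obtain ⟨s, hs, hsc⟩ :=
    exists_circleLift_height_eq (sub_pos.2 hc.1) (sub_lt_sub_right hc.2 a)
  set ρ := (b - a) / (4 * π) with hρ
  have hρ0 : 0 ≤ ρ := div_nonneg (by linarith [hc.1, hc.2]) (by positivity)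
  have hb' : (0, 0, a + 4 * π * ρ) ∈ S := by
    rwa [hρ, mul_div_cancel₀ _ (by positivity), add_sub_cancel]
  obtain ⟨x, hx⟩ := exists_sum_sq_eq (ι := Fin n) (r := 2 * ρ * (1 - cos s))
    (mul_nonneg (mul_nonneg zero_le_two hρ0) (sub_nonneg.2 (cos_le_one s)))
  have hmem : ∀ u : Fin n → ℝ, (∀ j, u j ^ 2 = x j ^ 2) → (u, 0, c) ∈ S := fun u hu => by
    have := hS.axis_bubble_mem ha hb' (u := u) (v := 0) hs (by simpa [hu] using hx)
    rwa [hsc, add_sub_cancel] at this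
  exact hS.axis_mem_of_neg_mem (hmem x fun _ => rfl) (by simpa using hmem (-x) (by simp))

lemma GeodConvexSet.vertical_ordConnected [NeZero n] (hS : GeodConvexSet S) (x y : Fin n → ℝ) :
    OrdConnected {t : ℝ | (x, y, t) ∈ S} := by
  simpa [leftTranslate_vertical] using (hS.preimage_leftTranslate (x, y, 0)).axis_ordConnected

lemma cos_three_pi_div_two : cos (3 * π / 2) = 0 := by
  rw [show 3 * π / 2 = π / 2 + π by ring, cos_add_pi, cos_pi_div_two, neg_zero]

lemma sin_three_pi_div_two : sin (3 * π / 2) = -1 := by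
  rw [show 3 * π / 2 = π / 2 + π by ring, sin_add_pi, sin_pi_div_two]

-- The chord of the bubble over `(x, 0)` ends at the parameters `π / 2` and `3 * π / 2`; a bubble
-- of squared radius `ρ / 4` spanned by its upper part is followed up to `3 * π / 2`.
lemma GeodConvexSet.tilted_bubble_mem [NeZero n] (hS : GeodConvexSet S) {a ρ : ℝ} (hρ : 0 ≤ ρ)
    (ha : (0, 0, a) ∈ S) (hb : (0, 0, a + 4 * π * ρ) ∈ S) {x : Fin n → ℝ}
    (hx : ∑ j, x j ^ 2 = 2 * ρ) : (x, -((1 / 2 : ℝ) • x), a + (11 * π / 4 + 9 / 2) * ρ) ∈ S := by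
  have hπ := pi_pos
  have hπ_mem : π / 2 ∈ Ioo 0 (2 * π) := ⟨by positivity, by linarith⟩
  have h3π_mem : 3 * π / 2 ∈ Ioo 0 (2 * π) := ⟨by positivity, by linarith⟩
  have hlow := hS.axis_bubble_mem ha hb (u := x) (v := 0) hπ_mem (by simp [hx])
  have htop := hS.axis_bubble_mem ha hb (u := x) (v := 0) h3π_mem
    (by simp [hx, cos_three_pi_div_two])
  rw [sin_pi_div_two] at hlow
  rw [sin_three_pi_div_two] at htop
  have hmid : (x, 0, a + (2 * π + 2) * ρ) ∈ S :=
    (hS.vertical_ordConnected x 0).out hlow htop ⟨by nlinarith, by nlinarith⟩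
  have htop' : (x, 0, a + (2 * π + 2) * ρ) + (0, 0, 4 * π * (ρ / 4)) ∈ S := by
    convert htop using 1
    ext j <;> simp
    ring
  have hsum : ∑ j, ((0 : Fin n → ℝ) j ^ 2 + (-((1 / 2 : ℝ) • x)) j ^ 2) =
      2 * (ρ / 4) * (1 - cos (3 * π / 2)) := by
    simp only [Pi.zero_apply, Pi.neg_apply, Pi.smul_apply, smul_eq_mul, neg_sq, mul_pow,
      cos_three_pi_div_two, zero_pow two_ne_zero, zero_add, ← Finset.mul_sum, hx]
    ring
  have hsymp : sympForm (x, 0, a + (2 * π + 2) * ρ)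
      (0, -((1 / 2 : ℝ) • x), 2 * (ρ / 4) * (3 * π / 2 - sin (3 * π / 2))) = ρ := by
    calc _ = ∑ j, 1 / 2 * x j ^ 2 := by
          rw [sympForm_apply]
          exact Finset.sum_congr rfl fun j _ => by simp; ring
      _ = ρ := by rw [← Finset.mul_sum, hx]; ring
  convert hS.leftTranslate_bubble_mem hmid htop' h3π_mem hsum using 1
  rw [leftTranslate, hsymp, sin_three_pi_div_two]
  ext j
  · simp
  · simp
  · simp only [Prod.snd_add]
    ring

lemma GeodConvexSet.axis_overshoot_mem [NeZero n] (hS : GeodConvexSet S) {a b : ℝ} (hab : a ≤ b)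
    (ha : (0, 0, a) ∈ S) (hb : (0, 0, b) ∈ S) :
    (0, 0, a + (11 / 16 + 9 / (8 * π)) * (b - a)) ∈ S := by
  set ρ := (b - a) / (4 * π) with hρ
  have hρ0 : 0 ≤ ρ := div_nonneg (by linarith) (by positivity)
  have hb' : (0, 0, a + 4 * π * ρ) ∈ S := by
    rwa [hρ, mul_div_cancel₀ _ (by positivity), add_sub_cancel]
  obtain ⟨x, hx⟩ := exists_sum_sq_eq (ι := Fin n) (r := 2 * ρ) (by positivity)
  have hmem := hS.axis_mem_of_neg_mem (hS.tilted_bubble_mem hρ0 ha hb' hx)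
    (by simpa using hS.tilted_bubble_mem hρ0 ha hb' (x := -x) (by simpa using hx))
  convert hmem using 3
  rw [hρ]
  field_simp
  ring

lemma one_lt_overshoot_ratio : 1 < 11 / 16 + 9 / (8 * π) := by
  have : 5 / 16 < 9 / (8 * π) := by
    rw [lt_div_iff₀ (by positivity)]
    linarith [pi_lt_d2]
  linarith

lemma GeodConvexSet.axis_mem_of_le [NeZero n] (hS : GeodConvexSet S) {a b t : ℝ} (hab : a < b)
    (ha : (0, 0, a) ∈ S) (hb : (0, 0, b) ∈ S) (hat : a ≤ t) : (0, 0, t) ∈ S := by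
  set r := 11 / 16 + 9 / (8 * π) with hr
  have hba : 0 < b - a := sub_pos.2 hab
  have hpow : ∀ m : ℕ, (0, 0, a + r ^ m * (b - a)) ∈ S := by
    intro m
    induction m with
    | zero => simpa using hb
    | succ m ih =>
      have := hS.axis_overshoot_mem (le_add_of_nonneg_right (by positivity)) ha ih
      rwa [← hr, add_sub_cancel_left, ← mul_assoc, ← pow_succ'] at this
  obtain ⟨m, hm⟩ := pow_unbounded_of_one_lt ((t - a) / (b - a)) one_lt_overshoot_ratio
  rw [← hr, div_lt_iff₀ hba] at hm
  exact hS.axis_ordConnected.out ha (hpow m) ⟨hat, by linarith⟩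

lemma GeodConvexSet.axis_mem [NeZero n] (hS : GeodConvexSet S) {a b : ℝ} (hab : a < b)
    (ha : (0, 0, a) ∈ S) (hb : (0, 0, b) ∈ S) (t : ℝ) : (0, 0, t) ∈ S := by
  rcases le_total a t with hat | hta
  · exact hS.axis_mem_of_le hab ha hb hat
  · have hS' := hS.preimage isHorizontalIsometry_reflect isHorizontalIsometry_reflect
      reflect_involutive.leftInverse
    have hmem := hS'.axis_mem_of_le (a := -b) (b := -a) (t := -t) (neg_lt_neg hab)
      (by simpa [reflect] using hb) (by simpa [reflect] using ha) (by linarith)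
    simpa [reflect] using hmem

theorem GeodConvexSet.eq_univ [NeZero n] (hS : GeodConvexSet S) {a b : ℝ} (hab : a < b)
    (ha : (0, 0, a) ∈ S) (hb : (0, 0, b) ∈ S) : S = univ := by
  refine eq_univ_of_forall fun ⟨x, y, t⟩ => ?_
  have haxis := hS.axis_mem hab ha hb
  set ρ := (∑ j, (x j ^ 2 + y j ^ 2)) / 4 with hρ
  have hmem := hS.axis_bubble_mem (ρ := ρ) (u := x) (v := y) (haxis (t - 2 * π * ρ)) (haxis _)
    ⟨pi_pos, by linarith [pi_pos]⟩ (by rw [hρ, cos_pi]; ring)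
  convert hmem using 3
  rw [sin_pi]
  ring

lemma subset_geodJoin (A : Set (Hpt n)) : A ⊆ geodJoin A := fun p hp =>
  ⟨p, hp, p, hp, fun _ => p, 0, 0, isGeodesicOn_const p le_rfl, rfl, rfl, 0, by simp, rfl⟩

lemma monotone_Gm (A : Set (Hpt n)) : Monotone (Gm A) :=
  monotone_nat_of_le_succ fun m => subset_geodJoin (Gm A m)

lemma geodConvexSet_iUnion_Gm (A : Set (Hpt n)) : GeodConvexSet (⋃ m : ℕ, Gm A (m + 1)) := by
  intro p hp q hq γ a b hγ ha hb s hs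
  obtain ⟨i, hi⟩ := mem_iUnion.1 hp
  obtain ⟨j, hj⟩ := mem_iUnion.1 hq
  have hmono := monotone_Gm A
  exact mem_iUnion.2 ⟨max i j + 1, p, hmono (by simp) hi, q, hmono (by simp) hj, γ, a, b, hγ, ha,
    hb, mem_image_of_mem γ hs⟩

end Filling

/-- For `A = {(0,0,0), (0,0,T₀)}` with `T₀ > 0`, the union of the iterated
geodesic hulls `G^m(A)`, `m ≥ 1`, is the whole space `ℍⁿ`. -/
theorem stmt_5 (n : ℕ) (hn : 1 ≤ n) (T₀ : ℝ) (hT : 0 < T₀) :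
    (⋃ m : ℕ, Gm ({((0 : Fin n → ℝ), (0 : Fin n → ℝ), (0 : ℝ)),
      ((0 : Fin n → ℝ), (0 : Fin n → ℝ), T₀)} : Set (Hpt n)) (m + 1)) = Set.univ := by
  have : NeZero n := ⟨by omega⟩
  refine (geodConvexSet_iUnion_Gm _).eq_univ hT ?_ ?_
  · exact mem_iUnion.2 ⟨0, subset_geodJoin _ (mem_insert _ _)⟩
  · exact mem_iUnion.2 ⟨0, subset_geodJoin _ (mem_insert_of_mem _ rfl)⟩
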